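/- Let 𝕏 ⊆ ℙ^n_K be a 0-dimensional locally Gorenstein scheme with Δ_𝕏 = 1. Then 𝕏 is an almost Gorenstein scheme if and only if 𝕏 is a nearly Gorenstein Cayley–Bacharach scheme. -/

import Mathlib

noncomputable section

/-! An algebraic model for a 0-dimensional subscheme `𝕏 ⊆ ℙⁿ_K` whose support avoids
the hyperplane `Z(X₀)`.  The scheme is recorded through the local rings
`𝒪_{𝕏,p_j}` at the points `p_1, …, p_s` of its support, together with the germ map
sending a homogeneous polynomial `F` of degree `i` to the tuple of germs
`(F_{p_1}, …, F_{p_s})`; this is the degree-`i` component of the injection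
`ĩ : R → Q^h(R) ≅ ∏_j 𝒪_{𝕏,p_j}[T_j, T_j⁻¹]`, where every graded component of
`Q^h(R)` is identified with `Γ = ∏_j 𝒪_{𝕏,p_j}` by dropping the powers of the `T_j`.
Since `x₀` has germ `1` at every point, the homogeneous coordinate ring
`R = P/I_𝕏` is faithfully encoded by the chain of subspaces
`R_i ≅ V_i = germ(P_i) ⊆ Γ` (with `V_i ⊆ V_{i+1}`, and `V_i = Γ` for `i ≫ 0`). -/

/-- The data of one (fat) point of a 0-dimensional scheme: a finite local `K`-algebra. -/
structure PointData (K : Type) [Field K] : Type 1 where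
  carrier : Type
  [ring : CommRing carrier]
  [alg : Algebra K carrier]
  [loc : IsLocalRing carrier]
  [findim : FiniteDimensional K carrier]

attribute [instance] PointData.ring PointData.alg PointData.loc PointData.findim

/-- A model of a 0-dimensional subscheme of `ℙⁿ_K`, no point of whose support lies
on `Z(X₀)` (coordinates being chosen so that each point has `X₀`-coordinate 1, the
germ of `x₀` at every point is `1`). -/
structure ZeroDimScheme (K : Type) [Field K] (n : ℕ) : Type 1 where
  /-- the number of points in the support -/
  s : ℕ
  spos : 0 < s
  /-- the local rings `𝒪_{𝕏,p_j}` -/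
  pt : Fin s → PointData K
  /-- the germ map: for `F` homogeneous of degree `i` this is the degree-`i`
  component of `ĩ : R → Q^h(R)`, i.e. `F ↦ (F_{p_1}, …, F_{p_s})` -/
  germ : MvPolynomial (Fin (n + 1)) K →ₐ[K] ∀ j, (pt j).carrier
  /-- the germ of `X₀` at each point is `1` -/
  germ_X0 : germ (MvPolynomial.X 0) = 1
  /-- in all large degrees, the germ map is surjective onto `∏_j 𝒪_{𝕏,p_j}`
  (this characterizes `I_𝕏` as the full homogeneous vanishing ideal of the scheme) -/
  eventually_surj : ∃ N : ℕ, ∀ i, N ≤ i →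
    Submodule.map germ.toLinearMap
      (MvPolynomial.homogeneousSubmodule (Fin (n + 1)) K i) = ⊤

namespace ZeroDimScheme

variable {K : Type} [Field K] {n : ℕ}

/-- `Γ = ∏_j 𝒪_{𝕏,p_j}`, the common model for every graded component of `Q^h(R)`. -/
abbrev Gamma (S : ZeroDimScheme K n) : Type := ∀ j, (S.pt j).carrier

variable (S : ZeroDimScheme K n)

/-- `V i ⊆ Γ` is the image of the degree-`i` component `R_i` of the homogeneous
coordinate ring `R` under (the degree-`i` component of) `ĩ`; we identify `R_i ≅ V i`. -/
def V (i : ℕ) : Submodule K S.Gamma :=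
  Submodule.map S.germ.toLinearMap
    (MvPolynomial.homogeneousSubmodule (Fin (n + 1)) K i)

/-- `R_i` for `i : ℤ` (zero in negative degrees). -/
def Vz (i : ℤ) : Submodule K S.Gamma := if 0 ≤ i then S.V i.toNat else ⊥

/-- `deg 𝕏 = Σ_j dim_K 𝒪_{𝕏,p_j}`. -/
def degX : ℕ := Module.finrank K S.Gamma

/-- The Hilbert function `HF_𝕏(i) = dim_K R_i`. -/
def HF (i : ℕ) : ℕ := Module.finrank K (S.V i)

/-- The Hilbert function on `ℤ`. -/
def HFz (i : ℤ) : ℕ := Module.finrank K (S.Vz i)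

/-- The regularity index `r_𝕏`: the least `r` with `HF_𝕏(i) = deg 𝕏` for all `i ≥ r`. -/
def rX : ℕ := sInf {r : ℕ | ∀ i, r ≤ i → S.HF i = S.degX}

/-- `κ_j = dim_K κ(p_j)`, the residue field of `𝕏` at `p_j`. -/
def kappa (j : Fin S.s) : ℕ :=
  Module.finrank K
    ((S.pt j).carrier ⧸
      Submodule.restrictScalars K (IsLocalRing.maximalIdeal (S.pt j).carrier))

/-- `sj` is a socle element of `𝒪_{𝕏,p_j}`, i.e. `sj ∈ Ann(𝔪_{𝕏,p_j})`.  By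
Proposition 1.2, the maximal `p_j`-subschemes `𝕐 ⊆ 𝕏` correspond 1-1 to the ideals
of `Γ` generated by `(0,…,0,sj,0,…,0)` with `sj` a *nonzero* socle element. -/
def IsSocle (j : Fin S.s) (sj : (S.pt j).carrier) : Prop :=
  ∀ b ∈ IsLocalRing.maximalIdeal (S.pt j).carrier, sj * b = 0

/-- The ideal `U = ⟨(0,…,0,sj,0,…,0)⟩` of `Γ` corresponding to the maximal
`p_j`-subscheme `𝕐` determined by the socle element `sj`; one has `I_{𝕐/𝕏} = ĩ⁻¹(U)`. -/
def sepIdeal (j : Fin S.s) (sj : (S.pt j).carrier) : Submodule K S.Gamma :=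
  Submodule.restrictScalars K (Ideal.span {(Pi.single j sj : S.Gamma)})

/-- The degree-`i` component `(I_{𝕐/𝕏})_i = R_i ∩ ĩ⁻¹(U)` of the ideal of the maximal
`p_j`-subscheme `𝕐` (given by the socle element `sj`) in `R`. -/
def IY (j : Fin S.s) (sj : (S.pt j).carrier) (i : ℕ) : Submodule K S.Gamma :=
  S.V i ⊓ S.sepIdeal j sj

/-- `(I_{𝕐/𝕏})_i` for `i : ℤ`. -/
def IYz (j : Fin S.s) (sj : (S.pt j).carrier) (i : ℤ) : Submodule K S.Gamma :=
  S.Vz i ⊓ S.sepIdeal j sj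

/-- The Hilbert function `HF_𝕐(i) = HF_𝕏(i) - dim_K (I_{𝕐/𝕏})_i` of the maximal
`p_j`-subscheme `𝕐` given by the socle element `sj`. -/
def HFY (j : Fin S.s) (sj : (S.pt j).carrier) (i : ℕ) : ℕ :=
  S.HF i - Module.finrank K (S.IY j sj i)

/-- `HF_𝕐` on `ℤ`. -/
def HFYz (j : Fin S.s) (sj : (S.pt j).carrier) (i : ℤ) : ℕ :=
  S.HFz i - Module.finrank K (S.IYz j sj i)

/-- `α_{𝕐/𝕏} = min {i | (I_{𝕐/𝕏})_i ≠ 0}`. -/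
def alphaY (j : Fin S.s) (sj : (S.pt j).carrier) : ℕ :=
  sInf {i : ℕ | S.IY j sj i ≠ ⊥}

/-- `μ(a) = min {i | (0,…,0,a T_j^i,0,…,0) ∈ ĩ(R)}` for `a ∈ 𝒪_{𝕏,p_j}`. -/
def mu (j : Fin S.s) (a : (S.pt j).carrier) : ℕ :=
  sInf {i : ℕ | (Pi.single j a : S.Gamma) ∈ S.V i}

/-- `μ_{𝕐/𝕏}`, the maximal degree of a minimal separator of the maximal
`p_j`-subscheme `𝕐` given by the socle element `sj`; independently of all choices it
equals `max {μ(a·sj) | a ∈ 𝒪_{𝕏,p_j}, a·sj ≠ 0}`. -/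
def muY (j : Fin S.s) (sj : (S.pt j).carrier) : ℕ :=
  sSup {m : ℕ | ∃ a : (S.pt j).carrier, a * sj ≠ 0 ∧ m = S.mu j (a * sj)}

/-- `deg_𝕏(p_j) = min {μ_{𝕐/𝕏} | 𝕐 a maximal p_j-subscheme of 𝕏}`. -/
def degP (j : Fin S.s) : ℕ :=
  sInf {m : ℕ | ∃ sj : (S.pt j).carrier, S.IsSocle j sj ∧ sj ≠ 0 ∧ m = S.muY j sj}

/-- `𝕏` has the Cayley–Bacharach property of degree `d`: `deg_𝕏(p_j) ≥ d + 1` for all `j`. -/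
def CBP (d : ℕ) : Prop := ∀ j : Fin S.s, d + 1 ≤ S.degP j

/-- `𝕏` is a Cayley–Bacharach scheme: it has `CBP(r_𝕏 - 1)`. -/
def CayleyBacharach : Prop := S.CBP (S.rX - 1)

/-- The residue class map `𝒪_{𝕏,p_j} → κ(p_j)` as a `K`-linear map. -/
def resQ (j : Fin S.s) :
    (S.pt j).carrier →ₗ[K]
      ((S.pt j).carrier ⧸
        Submodule.restrictScalars K (IsLocalRing.maximalIdeal (S.pt j).carrier)) :=
  (Submodule.restrictScalars K (IsLocalRing.maximalIdeal (S.pt j).carrier)).mkQ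

/-- The residue classes of `e 0, …, e (κ_j - 1)` form a `K`-basis of `κ(p_j)`. -/
def IsResidueBasis (j : Fin S.s) {m : ℕ} (e : Fin m → (S.pt j).carrier) : Prop :=
  LinearIndependent K (fun k => S.resQ j (e k)) ∧
    Submodule.span K (Set.range fun k => S.resQ j (e k)) = ⊤

/-- A family `τ_j : 𝒪_{𝕏,p_j} → K` of trace maps: each `τ_j` is a generator of
`Hom_K(𝒪_{𝕏,p_j}, K)` as an `𝒪_{𝕏,p_j}`-module.  Such a family exists iff `𝕏` is
locally Gorenstein, and it induces a homogeneous trace map `σ` of degree zero of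
`Q^h(R)/L₀` (componentwise). -/
def IsTraceFamily (τ : ∀ j, (S.pt j).carrier →ₗ[K] K) : Prop :=
  ∀ j, Function.Bijective
    (fun a : (S.pt j).carrier => (τ j).comp (LinearMap.mulRight K a))

/-- The total trace `Γ → K`, `y ↦ Σ_j τ_j (y_j)`; on the degree-`i` component of
`Q^h(R)` the trace map `σ` is `q ↦ (Ttot τ q)·x₀^i`. -/
def Ttot (τ : ∀ j, (S.pt j).carrier →ₗ[K] K) : S.Gamma →ₗ[K] K :=
  ∑ j : Fin S.s, (τ j).comp (LinearMap.proj j)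

/-- The degree-`k` component `(𝔠^σ_𝕏)_k ⊆ Q^h(R)_k ≅ Γ` of the Dedekind complementary
module: `g ∈ (𝔠^σ_𝕏)_k` iff `σ(g · R) ⊆ K[x₀]`, i.e. `Ttot τ (g·x) = 0` whenever
`x ∈ R_i` with `k + i < 0`. -/
def Cmod (τ : ∀ j, (S.pt j).carrier →ₗ[K] K) (k : ℤ) : Submodule K S.Gamma :=
  ⨅ (i : ℕ) (_ : k + (i : ℤ) < 0) (x : S.Gamma) (_ : x ∈ S.V i),
    LinearMap.ker ((S.Ttot τ).comp (LinearMap.mulRight K x))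

/-- The degree-`i` component `(δ^σ_𝕏)_i ⊆ Q^h(R)_i ≅ Γ` of the Dedekind different
`δ^σ_𝕏 = {f ∈ Q^h(R) | f · 𝔠^σ_𝕏 ⊆ R}`. -/
def delta (τ : ∀ j, (S.pt j).carrier →ₗ[K] K) (i : ℤ) : Submodule K S.Gamma :=
  ⨅ (k : ℤ) (g : S.Gamma) (_ : g ∈ S.Cmod τ k),
    Submodule.comap (LinearMap.mulRight K g) (S.Vz (i + k))

/-- The Hilbert function of the Dedekind different. -/
def HFdelta (τ : ∀ j, (S.pt j).carrier →ₗ[K] K) (i : ℤ) : ℕ :=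
  Module.finrank K (S.delta τ i)

/-- `𝕏` has minimal Dedekind different: `δ^σ_𝕏 = ⊕_{i ≥ 2 r_𝕏} R_i`
(recall `R_i ≅ Γ` for `i ≥ r_𝕏`). -/
def MinimalDedekind (τ : ∀ j, (S.pt j).carrier →ₗ[K] K) : Prop :=
  ∀ i : ℤ, S.delta τ i = if 2 * (S.rX : ℤ) ≤ i then ⊤ else ⊥

/-- The degree-`i` component (`i ≥ 0`) of the conductor
`𝔉_{R̃/R} = {f ∈ R̃ | f·R̃ ⊆ R}` of `R` in `R̃ = ∏_j 𝒪_{𝕏,p_j}[T_j]`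
(whose degree-`i` component is all of `Γ` for every `i ≥ 0`). -/
def cond (i : ℕ) : Submodule K S.Gamma :=
  ⨅ y : S.Gamma, Submodule.comap (LinearMap.mulRight K y) (S.V i)

/-- The conductor on `ℤ` (zero in negative degrees, where `R̃` vanishes). -/
def condZ (i : ℤ) : Submodule K S.Gamma := if 0 ≤ i then S.cond i.toNat else ⊥

/-- The degree-`i` component of the trace `tr(𝔠^σ_𝕏) = δ^σ_𝕏 · 𝔠^σ_𝕏` of the
Dedekind complementary module. -/
def trC (τ : ∀ j, (S.pt j).carrier →ₗ[K] K) (i : ℤ) : Submodule K S.Gamma :=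
  ⨆ (a : ℤ) (b : ℤ) (_ : a + b = i), S.delta τ a * S.Cmod τ b

/-- `𝕏` is nearly Gorenstein: `𝔪 ⊆ tr(𝔠^σ_𝕏)`. -/
def NearlyGorenstein (τ : ∀ j, (S.pt j).carrier →ₗ[K] K) : Prop :=
  ∀ i : ℤ, 1 ≤ i → S.Vz i ≤ S.trC τ i

/-- `𝕏` is almost Gorenstein: there is an exact sequence of graded `R`-modules
`0 → R → 𝔠^σ_𝕏(-r_𝕏) → C → 0` with `𝔪·C = 0`.  A degree-zero graded injection
`R → 𝔠^σ_𝕏(-r_𝕏)` is multiplication by an element `g ∈ (𝔠^σ_𝕏)_{-r_𝕏}` with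
`Ann_R(g) = 0`, and `𝔪·C = 0` means `𝔪 · 𝔠^σ_𝕏(-r_𝕏) ⊆ g·R`. -/
def AlmostGorenstein (τ : ∀ j, (S.pt j).carrier →ₗ[K] K) : Prop :=
  ∃ g ∈ S.Cmod τ (-(S.rX : ℤ)),
    (∀ i : ℕ, ∀ x ∈ S.V i, x * g = 0 → x = 0) ∧
    (∀ a : ℕ, 1 ≤ a → ∀ x ∈ S.V a, ∀ k : ℤ, ∀ h ∈ S.Cmod τ k,
      x * h ∈ Submodule.map (LinearMap.mulRight K g) (S.Vz ((a : ℤ) + k + (S.rX : ℤ))))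

/-- `𝕏` is arithmetically Gorenstein, i.e. `R` is a Gorenstein ring; equivalently the
canonical module is free of rank one: `𝔠^σ_𝕏 = g·R` for some `g ∈ (𝔠^σ_𝕏)_{-r_𝕏}`. -/
def ArithGorenstein (τ : ∀ j, (S.pt j).carrier →ₗ[K] K) : Prop :=
  ∃ g ∈ S.Cmod τ (-(S.rX : ℤ)),
    ∀ k : ℤ, S.Cmod τ k = Submodule.map (LinearMap.mulRight K g) (S.Vz (k + (S.rX : ℤ)))

/-- `𝕏` is level: the socle of `R̄ = R/⟨x₀⟩` equals `R̄_{r_𝕏}`, i.e. no nonzero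
homogeneous element of `R̄` of degree `< r_𝕏` is annihilated by `𝔪̄` (recall
`R̄_i ≅ V i / V (i-1)` and `x₀`-multiplication preserves germs). -/
def Level : Prop :=
  ∀ i : ℕ, i < S.rX → ∀ x ∈ S.V i,
    (∀ a : ℕ, 1 ≤ a → ∀ y ∈ S.V a, x * y ∈ S.Vz ((i : ℤ) + (a : ℤ) - 1)) →
      x ∈ S.Vz ((i : ℤ) - 1)

/-- The subspace `{x ∈ Γ | x_k = 0 for k ≠ j}` of `Γ`: the degreewise model for the
ideal of the subscheme `𝕐_j ⊆ 𝕏` with `I_{𝕐_j} = ∩_{k ≠ j} I_k`. -/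
def Wj (j : Fin S.s) : Submodule K S.Gamma :=
  ⨅ (k : Fin S.s) (_ : k ≠ j),
    LinearMap.ker (LinearMap.proj k : S.Gamma →ₗ[K] (S.pt k).carrier)

/-- `(I_{𝕐_j/𝕏})_i` for the subscheme `𝕐_j` complementary to `p_j`. -/
def IW (j : Fin S.s) (i : ℕ) : Submodule K S.Gamma := S.V i ⊓ S.Wj j

/-- The Hilbert function of the subscheme `𝕐_j` complementary to `p_j`. -/
def HFW (j : Fin S.s) (i : ℕ) : ℕ := S.HF i - Module.finrank K (S.IW j i)

/-- `α_{𝕐_j/𝕏}` for the subscheme `𝕐_j` complementary to `p_j`. -/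
def alphaW (j : Fin S.s) : ℕ := sInf {i : ℕ | S.IW j i ≠ ⊥}

/-- The subspace `{x ∈ Γ | x_k = 0 for k ∉ {j₁, j₂}}` of `Γ`: the degreewise model for
the ideal in `R` of the subscheme of the reduced scheme `𝕏` complementary to `{p_{j₁}, p_{j₂}}`. -/
def Wpair (j1 j2 : Fin S.s) : Submodule K S.Gamma :=
  ⨅ (k : Fin S.s) (_ : k ≠ j1) (_ : k ≠ j2),
    LinearMap.ker (LinearMap.proj k : S.Gamma →ₗ[K] (S.pt k).carrier)

/-- The homogeneous vanishing ideal `I_𝕏 ⊆ P`. -/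
def IX : Ideal (MvPolynomial (Fin (n + 1)) K) :=
  Ideal.span {F | (∃ i : ℕ, F ∈ MvPolynomial.homogeneousSubmodule (Fin (n + 1)) K i) ∧
    S.germ F = 0}

/-- The `n×n`-minor (Jacobian determinant with respect to `X_1, …, X_n`) of an
`n`-tuple of polynomials. -/
def jacMinor (Fs : Fin n → MvPolynomial (Fin (n + 1)) K) : MvPolynomial (Fin (n + 1)) K :=
  Matrix.det (Matrix.of fun a b : Fin n => MvPolynomial.pderiv (Fin.succ b) (Fs a))

/-- The preimage in `P` of the Kähler different `ϑ_𝕏 ⊆ R`: the ideal generated by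
`I_𝕏` together with all `n×n` minors of the Jacobian matrix of elements of `I_𝕏`. -/
def KaehlerIdeal : Ideal (MvPolynomial (Fin (n + 1)) K) :=
  S.IX ⊔ Ideal.span {m | ∃ Fs : Fin n → MvPolynomial (Fin (n + 1)) K,
    (∀ a, Fs a ∈ S.IX) ∧ m = jacMinor Fs}

/-- The degree-`i` component of the Kähler different `ϑ_𝕏 ⊆ R`, viewed inside `Γ`. -/
def thetaPiece (i : ℕ) : Submodule K S.Gamma :=
  Submodule.map S.germ.toLinearMap
    (Submodule.restrictScalars K S.KaehlerIdeal ⊓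
      MvPolynomial.homogeneousSubmodule (Fin (n + 1)) K i)

end ZeroDimScheme

end

/-! The form `(x, y) ↦ σ(xy)` is a perfect pairing on `Γ` under which `(𝔠^σ_𝕏)_{-d-1}` is the
orthogonal complement of `R_d`. So `(𝔠^σ_𝕏)_{-r_𝕏}` has dimension `Δ_𝕏`, and for a nonzero socle
element `t` at `p_j` the ideal `⟨t⟩` is not contained in `R_d` exactly when some element of
`(𝔠^σ_𝕏)_{-d-1}` is a unit at `p_j`: this is the Cayley–Bacharach property of degree `d`.

The scheme is almost Gorenstein iff `(𝔠^σ_𝕏)_{-r_𝕏}` contains a unit `g` of `Γ` with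
`g⁻¹ R_1 ⊆ δ^σ_𝕏`. Then `x = (x g⁻¹) g ∈ tr(𝔠^σ_𝕏)` for all `x ∈ 𝔪`, and `g` witnesses the
Cayley–Bacharach property. Conversely, if `Δ_𝕏 = 1`, the Cayley–Bacharach property makes the
generator `g` of `(𝔠^σ_𝕏)_{-r_𝕏}` a unit, and `tr(𝔠^σ_𝕏)_1` is the sum of `(δ^σ_𝕏)_{r_𝕏+1} · g`
and `(δ^σ_𝕏)_{r_𝕏} · (𝔠^σ_𝕏)_{1-r_𝕏}`. As `g · (δ^σ_𝕏)_{r_𝕏} ⊆ R_0 = K`, the second summand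
vanishes unless `g⁻¹ ∈ δ^σ_𝕏`; in either case `R_1 ⊆ tr(𝔠^σ_𝕏)` yields `g⁻¹ R_1 ⊆ δ^σ_𝕏`. -/

open IsLocalRing in
lemma exists_ne_zero_mul_maximalIdeal_eq_zero (A : Type*) [CommRing A] [IsLocalRing A]
    [IsArtinianRing A] : ∃ x : A, x ≠ 0 ∧ ∀ b ∈ maximalIdeal A, x * b = 0 := by
  obtain ⟨I, hI⟩ := associatedPrimes.nonempty A A
  obtain ⟨hprime, x, hx⟩ := isAssociatedPrime_iff.mp hI
  have hImax : I = maximalIdeal A := eq_maximalIdeal (IsArtinianRing.isMaximal_of_isPrime I)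
  refine ⟨x, ?_, fun b hb ↦ ?_⟩
  · rintro rfl
    exact hprime.ne_top (by simp [hx])
  · rw [← hImax, hx, Submodule.mem_colon_singleton, Submodule.mem_bot] at hb
    rwa [mul_comm]

namespace ZeroDimScheme

variable {K : Type} [Field K] {n : ℕ} (S : ZeroDimScheme K n)

/-! ### The graded pieces of the homogeneous coordinate ring -/

lemma V_eq_pow (i : ℕ) : S.V i = S.V 1 ^ i := by
  rw [V, V, ← MvPolynomial.homogeneousSubmodule_one_pow, Submodule.map_pow]

lemma V_zero : S.V 0 = 1 := by
  rw [V_eq_pow, pow_zero]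

lemma V_add (a b : ℕ) : S.V (a + b) = S.V a * S.V b := by
  rw [V_eq_pow, pow_add, ← V_eq_pow, ← V_eq_pow]

lemma one_le_V_one : 1 ≤ S.V 1 :=
  Submodule.one_le.mpr ⟨MvPolynomial.X 0, MvPolynomial.isHomogeneous_X _ _, S.germ_X0⟩

lemma V_mono : Monotone S.V := by
  refine monotone_nat_of_le_succ fun i ↦ ?_
  rw [V_add]
  exact le_mul_of_one_le_right' S.one_le_V_one

lemma Vz_natCast (i : ℕ) : S.Vz i = S.V i := by
  simp [Vz]

lemma Vz_of_neg {i : ℤ} (hi : i < 0) : S.Vz i = ⊥ := by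
  simp [Vz, hi]

variable {S} in
lemma mul_mem_Vz {a b : ℤ} {x y : S.Gamma} (hx : x ∈ S.Vz a) (hy : y ∈ S.Vz b) :
    x * y ∈ S.Vz (a + b) := by
  rcases lt_or_ge a 0 with ha | ha
  · rw [S.Vz_of_neg ha, Submodule.mem_bot] at hx
    simp [hx]
  rcases lt_or_ge b 0 with hb | hb
  · rw [S.Vz_of_neg hb, Submodule.mem_bot] at hy
    simp [hy]
  lift a to ℕ using ha
  lift b to ℕ using hb
  rw [Vz_natCast] at hx hy
  rw [← Nat.cast_add, Vz_natCast, V_add]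
  exact Submodule.mul_mem_mul hx hy

lemma HF_eq_degX_of_V_eq_top {i : ℕ} (h : S.V i = ⊤) : S.HF i = S.degX := by
  rw [HF, h, finrank_top, degX]

lemma V_eq_top_of_rX_le {i : ℕ} (hi : S.rX ≤ i) : S.V i = ⊤ := by
  have hne : {r : ℕ | ∀ i, r ≤ i → S.HF i = S.degX}.Nonempty := by
    obtain ⟨N, hN⟩ := S.eventually_surj
    exact ⟨N, fun i hi ↦ S.HF_eq_degX_of_V_eq_top (hN i hi)⟩
  exact Submodule.eq_top_of_finrank_eq (Nat.sInf_mem hne i hi)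

lemma rX_pos_of_HF_ne_degX (h : S.HF (S.rX - 1) ≠ S.degX) : 0 < S.rX := by
  refine Nat.pos_of_ne_zero fun h0 ↦ h (S.HF_eq_degX_of_V_eq_top (S.V_eq_top_of_rX_le ?_))
  omega

/-! ### Separators and the Cayley–Bacharach property -/

variable {S}

lemma IsSocle.mul_ne_zero_iff {j : Fin S.s} {t : (S.pt j).carrier} (ht : S.IsSocle j t)
    (ht0 : t ≠ 0) {b : (S.pt j).carrier} : b * t ≠ 0 ↔ IsUnit b := by
  refine ⟨fun hbt ↦ ?_, fun hb ↦ hb.mul_right_eq_zero.not.mpr ht0⟩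
  by_contra hb
  exact hbt (by rw [mul_comm, ht b hb])

lemma single_mem_V_rX (j : Fin S.s) (a : (S.pt j).carrier) :
    (Pi.single j a : S.Gamma) ∈ S.V S.rX := by
  simp [S.V_eq_top_of_rX_le le_rfl]

lemma lt_mu_iff {j : Fin S.s} {a : (S.pt j).carrier} {d : ℕ} :
    d < S.mu j a ↔ (Pi.single j a : S.Gamma) ∉ S.V d := by
  refine ⟨Nat.notMem_of_lt_sInf, fun h ↦ ?_⟩
  have hmem : (Pi.single j a : S.Gamma) ∈ S.V (S.mu j a) :=
    Nat.sInf_mem (s := {i | (Pi.single j a : S.Gamma) ∈ S.V i}) ⟨_, single_mem_V_rX j a⟩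
  by_contra! hle
  exact h (S.V_mono hle hmem)

lemma lt_muY_iff {j : Fin S.s} {t : (S.pt j).carrier} (ht0 : t ≠ 0) {d : ℕ} :
    d < S.muY j t ↔ ∃ a, (Pi.single j (a * t) : S.Gamma) ∉ S.V d := by
  have hbdd : BddAbove {m : ℕ | ∃ a, a * t ≠ 0 ∧ m = S.mu j (a * t)} := by
    refine ⟨S.rX, ?_⟩
    rintro _ ⟨a, -, rfl⟩
    exact Nat.sInf_le (single_mem_V_rX j _)
  have hne : {m : ℕ | ∃ a, a * t ≠ 0 ∧ m = S.mu j (a * t)}.Nonempty :=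
    ⟨_, 1, by rwa [one_mul], rfl⟩
  rw [muY, lt_csSup_iff hbdd hne]
  constructor
  · rintro ⟨_, ⟨a, -, rfl⟩, hd⟩
    exact ⟨a, lt_mu_iff.mp hd⟩
  · rintro ⟨a, ha⟩
    refine ⟨_, ⟨a, ?_, rfl⟩, lt_mu_iff.mpr ha⟩
    intro h0
    simp [h0] at ha

variable (S) in
lemma exists_isSocle_ne_zero (j : Fin S.s) : ∃ t, S.IsSocle j t ∧ t ≠ 0 := by
  have : IsArtinianRing (S.pt j).carrier := .of_finite K _
  obtain ⟨t, ht0, ht⟩ := exists_ne_zero_mul_maximalIdeal_eq_zero (S.pt j).carrier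
  exact ⟨t, ht, ht0⟩

lemma lt_degP_iff {j : Fin S.s} {d : ℕ} : d < S.degP j ↔ ∀ t, S.IsSocle j t → t ≠ 0 →
    ∃ a, (Pi.single j (a * t) : S.Gamma) ∉ S.V d := by
  obtain ⟨t₀, ht₀, ht₀0⟩ := S.exists_isSocle_ne_zero j
  constructor
  · intro h t ht ht0
    exact (lt_muY_iff ht0).mp (h.trans_le (Nat.sInf_le ⟨t, ht, ht0, rfl⟩))
  · intro h
    obtain ⟨t, ht, ht0, hdeg⟩ : S.degP j ∈ {m | ∃ t, S.IsSocle j t ∧ t ≠ 0 ∧ m = S.muY j t} :=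
      Nat.sInf_mem ⟨_, t₀, ht₀, ht₀0, rfl⟩
    rw [hdeg]
    exact (lt_muY_iff ht0).mpr (h t ht ht0)

/-! ### The trace form -/

variable {τ : ∀ j, (S.pt j).carrier →ₗ[K] K}

variable (S τ) in
/-- The bilinear form `(x, y) ↦ Σ_j τ_j (x_j y_j)` on `Γ`, which puts the graded pieces of the
Dedekind complementary module in duality with those of `R`. -/
noncomputable def traceForm : LinearMap.BilinForm K S.Gamma :=
  (LinearMap.mul K S.Gamma).compr₂ (S.Ttot τ)

lemma traceForm_apply (x y : S.Gamma) : S.traceForm τ x y = S.Ttot τ (x * y) := rfl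

lemma traceForm_isRefl : (S.traceForm τ).IsRefl := fun x y h ↦ by
  rwa [traceForm_apply, mul_comm, ← traceForm_apply]

lemma traceForm_single (x : S.Gamma) (j : Fin S.s) (a : (S.pt j).carrier) :
    S.traceForm τ x (Pi.single j a) = τ j (x j * a) := by
  rw [traceForm_apply, Ttot, LinearMap.sum_apply, Finset.sum_eq_single j]
  · simp
  · intro k _ hk
    simp [hk]
  · simp

lemma IsTraceFamily.eq_zero_of_forall (hτ : S.IsTraceFamily τ) {j : Fin S.s}
    {b : (S.pt j).carrier} (h : ∀ a, τ j (b * a) = 0) : b = 0 := by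
  refine (hτ j).injective (LinearMap.ext fun a ↦ ?_)
  simp [mul_comm a b, h a]

lemma IsTraceFamily.traceForm_nondegenerate (hτ : S.IsTraceFamily τ) :
    (S.traceForm τ).Nondegenerate := by
  refine (LinearMap.IsRefl.nondegenerate_iff_separatingLeft (B := S.traceForm τ)
    traceForm_isRefl).mpr fun x hx ↦ ?_
  ext j
  exact hτ.eq_zero_of_forall fun a ↦ by rw [← traceForm_single, hx]

/-! ### The Dedekind complementary module -/

variable (τ) in
lemma Cmod_neg_add_one (d : ℕ) :
    S.Cmod τ (-((d : ℤ) + 1)) = (S.traceForm τ).orthogonal (S.V d) := by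
  ext g
  simp only [Cmod, Submodule.mem_iInf, LinearMap.mem_ker, LinearMap.comp_apply,
    LinearMap.mulRight_apply, LinearMap.BilinForm.mem_orthogonal_iff, traceForm_apply]
  constructor
  · intro h x hx
    rw [mul_comm, h d (by omega) x hx]
  · intro h i hi x hx
    rw [mul_comm, h x (S.V_mono (by omega) hx)]

lemma finrank_Cmod_neg_add_one (hτ : S.IsTraceFamily τ) (d : ℕ) :
    Module.finrank K (S.Cmod τ (-((d : ℤ) + 1))) = S.degX - S.HF d := by
  rw [Cmod_neg_add_one, LinearMap.BilinForm.finrank_orthogonal hτ.traceForm_nondegenerate,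
    degX, HF]

lemma mem_V_iff_forall_mem_Cmod (hτ : S.IsTraceFamily τ) {d : ℕ} {x : S.Gamma} :
    x ∈ S.V d ↔ ∀ c ∈ S.Cmod τ (-((d : ℤ) + 1)), S.traceForm τ c x = 0 := by
  rw [Cmod_neg_add_one]
  conv_lhs => rw [← LinearMap.BilinForm.orthogonal_orthogonal hτ.traceForm_nondegenerate
    traceForm_isRefl (S.V d)]
  rfl

lemma Cmod_eq_bot_of_lt (hτ : S.IsTraceFamily τ) {k : ℤ} (hk : k < -(S.rX : ℤ)) :
    S.Cmod τ k = ⊥ := by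
  obtain ⟨d, rfl⟩ : ∃ d : ℕ, k = -((d : ℤ) + 1) := ⟨(-k - 1).toNat, by omega⟩
  rw [Cmod_neg_add_one, S.V_eq_top_of_rX_le (by omega),
    LinearMap.BilinForm.orthogonal_top_eq_bot hτ.traceForm_nondegenerate]

lemma exists_single_mul_notMem_V_iff (hτ : S.IsTraceFamily τ) {d : ℕ} {j : Fin S.s}
    {t : (S.pt j).carrier} : (∃ a, (Pi.single j (a * t) : S.Gamma) ∉ S.V d) ↔
      ∃ c ∈ S.Cmod τ (-((d : ℤ) + 1)), c j * t ≠ 0 := by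
  simp only [mem_V_iff_forall_mem_Cmod hτ, not_forall, traceForm_single]
  constructor
  · rintro ⟨a, c, hc, hne⟩
    refine ⟨c, hc, fun h0 ↦ hne ?_⟩
    rw [mul_left_comm, h0, mul_zero, map_zero]
  · rintro ⟨c, hc, hne⟩
    by_contra! h
    refine hne (hτ.eq_zero_of_forall fun a ↦ ?_)
    rw [mul_assoc, mul_comm t, h a c hc]

theorem CBP_iff_forall_exists_isUnit (hτ : S.IsTraceFamily τ) {d : ℕ} :
    S.CBP d ↔ ∀ j, ∃ c ∈ S.Cmod τ (-((d : ℤ) + 1)), IsUnit (c j) := by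
  refine forall_congr' fun j ↦ ?_
  rw [Nat.succ_le_iff, lt_degP_iff]
  simp only [exists_single_mul_notMem_V_iff hτ]
  constructor
  · intro h
    obtain ⟨t, ht, ht0⟩ := S.exists_isSocle_ne_zero j
    obtain ⟨c, hc, hct⟩ := h t ht ht0
    exact ⟨c, hc, (ht.mul_ne_zero_iff ht0).mp hct⟩
  · rintro ⟨c, hc, hcj⟩ t ht ht0
    exact ⟨c, hc, (ht.mul_ne_zero_iff ht0).mpr hcj⟩

theorem CBP.exists_units_Cmod_eq_span (hτ : S.IsTraceFamily τ) {d : ℕ}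
    (hd : S.degX - S.HF d = 1) (hCB : S.CBP d) :
    ∃ g : S.Gammaˣ, S.Cmod τ (-((d : ℤ) + 1)) = Submodule.span K {(g : S.Gamma)} := by
  rw [← finrank_Cmod_neg_add_one hτ] at hd
  obtain ⟨g, hgmem, hg0⟩ := Submodule.exists_mem_ne_zero_of_ne_bot
    (Submodule.one_le_finrank_iff.mp hd.ge)
  have hg := eq_span_singleton_of_mem_of_finrank_eq_one hd hgmem hg0
  have hunit : IsUnit g := by
    refine Pi.isUnit_iff.mpr fun j ↦ ?_
    obtain ⟨c, hc, hcj⟩ := (CBP_iff_forall_exists_isUnit hτ).mp hCB j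
    obtain ⟨t, rfl⟩ := Submodule.mem_span_singleton.mp (hg ▸ hc)
    rw [Pi.smul_apply, Algebra.smul_def] at hcj
    exact isUnit_of_mul_isUnit_right hcj
  exact ⟨hunit.unit, hg⟩

/-! ### The Dedekind different and the trace of the complementary module -/

lemma mem_delta_iff {i : ℤ} {f : S.Gamma} :
    f ∈ S.delta τ i ↔ ∀ k, ∀ c ∈ S.Cmod τ k, f * c ∈ S.Vz (i + k) := by
  simp [delta]

lemma mul_mem_delta {a i : ℤ} {x f : S.Gamma} (hx : x ∈ S.Vz a) (hf : f ∈ S.delta τ i) :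
    x * f ∈ S.delta τ (a + i) := by
  refine mem_delta_iff.mpr fun k c hc ↦ ?_
  rw [mul_assoc, add_assoc]
  exact mul_mem_Vz hx (mem_delta_iff.mp hf k c hc)

lemma mul_mem_trC {a b i : ℤ} (hab : a + b = i) {f c : S.Gamma} (hf : f ∈ S.delta τ a)
    (hc : c ∈ S.Cmod τ b) : f * c ∈ S.trC τ i :=
  Submodule.mem_iSup_of_mem a <| Submodule.mem_iSup_of_mem b <|
    Submodule.mem_iSup_of_mem hab <| Submodule.mul_mem_mul hf hc

lemma trC_le_iff {i : ℤ} {P : Submodule K S.Gamma} : S.trC τ i ≤ P ↔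
    ∀ a b, a + b = i → ∀ f ∈ S.delta τ a, ∀ c ∈ S.Cmod τ b, f * c ∈ P := by
  simp only [trC, iSup_le_iff, Submodule.mul_le]

lemma delta_eq_bot_of_units_mem_Cmod {g : S.Gammaˣ} {k : ℤ} (hg : (g : S.Gamma) ∈ S.Cmod τ k)
    {i : ℤ} (hik : i + k < 0) : S.delta τ i = ⊥ := by
  refine (Submodule.eq_bot_iff _).mpr fun f hf ↦ ?_
  have hfg := mem_delta_iff.mp hf k g hg
  rwa [S.Vz_of_neg hik, Submodule.mem_bot, Units.mul_left_eq_zero] at hfg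

lemma units_inv_mem_delta {g : S.Gammaˣ} {k : ℤ} (hg : (g : S.Gamma) ∈ S.Cmod τ k)
    {i : ℤ} (hik : i + k = 0) {f : S.Gamma} (hf : f ∈ S.delta τ i) (hf0 : f ≠ 0) :
    (↑g⁻¹ : S.Gamma) ∈ S.delta τ i := by
  have hfg := mem_delta_iff.mp hf k g hg
  rw [hik, ← Nat.cast_zero, Vz_natCast, V_zero, Submodule.mem_one] at hfg
  obtain ⟨t, ht⟩ := hfg
  obtain rfl : f = t • (↑g⁻¹ : S.Gamma) := by
    rw [Algebra.smul_def, ht, Units.mul_inv_cancel_right]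
  exact (Submodule.smul_mem_iff _ (left_ne_zero_of_smul hf0)).mp hf

lemma mul_mem_delta_of_forall_mem_V_one {y : S.Gamma} {i : ℤ}
    (h : ∀ x ∈ S.V 1, x * y ∈ S.delta τ (i + 1)) {a : ℕ} (ha : 1 ≤ a)
    {x : S.Gamma} (hx : x ∈ S.V a) : x * y ∈ S.delta τ (i + a) := by
  obtain ⟨m, rfl⟩ := Nat.exists_eq_add_of_le' ha
  have hle : S.V (m + 1) ≤ (S.delta τ (i + (m + 1 : ℕ))).comap (LinearMap.mulRight K y) := by
    rw [V_add, Submodule.mul_le]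
    intro v hv w hw
    rw [← Vz_natCast] at hv
    rw [Submodule.mem_comap, LinearMap.mulRight_apply, mul_assoc, Nat.cast_add_one, add_left_comm]
    exact mul_mem_delta hv (h w hw)
  exact hle hx

/-! ### Almost Gorenstein and nearly Gorenstein schemes -/

theorem almostGorenstein_iff_exists_units : S.AlmostGorenstein τ ↔
    ∃ g : S.Gammaˣ, (g : S.Gamma) ∈ S.Cmod τ (-(S.rX : ℤ)) ∧
      ∀ x ∈ S.V 1, x * (↑g⁻¹ : S.Gamma) ∈ S.delta τ (S.rX + 1) := by
  constructor
  · rintro ⟨g, hg, hinj, hmul⟩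
    have : IsArtinianRing S.Gamma := .of_finite K _
    have hunit : IsUnit g := IsArtinianRing.isUnit_of_mem_nonZeroDivisors <|
      mem_nonZeroDivisors_iff_right.mpr fun x hx ↦
        hinj S.rX x (by simp [S.V_eq_top_of_rX_le le_rfl]) hx
    lift g to S.Gammaˣ using hunit
    refine ⟨g, hg, fun x hx ↦ mem_delta_iff.mpr fun k c hc ↦ ?_⟩
    obtain ⟨y, hy, hyg⟩ := hmul 1 le_rfl x hx k c hc
    have hxc : x * ↑g⁻¹ * c = y := by
      rw [mul_right_comm, ← hyg, LinearMap.mulRight_apply, Units.mul_inv_cancel_right]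
    rwa [hxc, show (S.rX + 1 + k : ℤ) = (1 : ℕ) + k + S.rX by push_cast; ring]
  · rintro ⟨g, hg, hdelta⟩
    refine ⟨g, hg, fun i x _ hx ↦ g.mul_left_eq_zero.mp hx, fun a ha x hx k c hc ↦ ?_⟩
    refine ⟨x * ↑g⁻¹ * c, ?_, ?_⟩
    · rw [add_right_comm, add_comm (a : ℤ)]
      exact mem_delta_iff.mp (mul_mem_delta_of_forall_mem_V_one hdelta ha hx) k c hc
    · rw [LinearMap.mulRight_apply, mul_right_comm, Units.inv_mul_cancel_right]

theorem AlmostGorenstein.nearlyGorenstein (h : S.AlmostGorenstein τ) : S.NearlyGorenstein τ := by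
  obtain ⟨g, hg, hdelta⟩ := almostGorenstein_iff_exists_units.mp h
  intro i hi x hx
  lift i to ℕ using by omega
  rw [Vz_natCast] at hx
  rw [← g.inv_mul_cancel_right x]
  exact mul_mem_trC (by ring) (mul_mem_delta_of_forall_mem_V_one hdelta (by omega) hx) hg

theorem AlmostGorenstein.cayleyBacharach (hτ : S.IsTraceFamily τ) (hr : 0 < S.rX)
    (h : S.AlmostGorenstein τ) : S.CayleyBacharach := by
  obtain ⟨g, hg, -⟩ := almostGorenstein_iff_exists_units.mp h
  refine (CBP_iff_forall_exists_isUnit hτ).mpr fun j ↦ ⟨g, ?_, g.isUnit.map (Pi.evalRingHom _ j)⟩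
  convert hg using 2
  omega

lemma trC_one_le_of_Cmod_eq_span (hτ : S.IsTraceFamily τ) {g : S.Gammaˣ}
    (hg : S.Cmod τ (-(S.rX : ℤ)) = Submodule.span K {(g : S.Gamma)}) :
    S.trC τ 1 ≤ (S.delta τ (S.rX + 1)).comap (LinearMap.mulRight K (↑g⁻¹ : S.Gamma)) := by
  have hgmem : (g : S.Gamma) ∈ S.Cmod τ (-(S.rX : ℤ)) :=
    hg ▸ Submodule.mem_span_singleton_self _
  refine trC_le_iff.mpr fun a b hab f hf c hc ↦ ?_
  rw [Submodule.mem_comap, LinearMap.mulRight_apply]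
  obtain ha | rfl | hb | ⟨rfl, rfl⟩ : a < S.rX ∨ a = S.rX ∨ b < -(S.rX : ℤ) ∨
      a = S.rX + 1 ∧ b = -(S.rX : ℤ) := by omega
  · rw [delta_eq_bot_of_units_mem_Cmod hgmem (by omega), Submodule.mem_bot] at hf
    simp [hf]
  · rcases eq_or_ne f 0 with rfl | hf0
    · simp
    have hfc : f * c ∈ S.Vz 1 := hab ▸ mem_delta_iff.mp hf b c hc
    rw [add_comm]
    exact mul_mem_delta hfc (units_inv_mem_delta hgmem (add_neg_cancel _) hf hf0)
  · rw [Cmod_eq_bot_of_lt hτ hb, Submodule.mem_bot] at hc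
    simp [hc]
  · obtain ⟨t, rfl⟩ := Submodule.mem_span_singleton.mp (hg ▸ hc)
    rw [mul_smul_comm, smul_mul_assoc, Units.mul_inv_cancel_right]
    exact Submodule.smul_mem _ t hf

theorem NearlyGorenstein.almostGorenstein (hτ : S.IsTraceFamily τ)
    (hΔ : S.degX - S.HF (S.rX - 1) = 1) (hN : S.NearlyGorenstein τ)
    (hCB : S.CayleyBacharach) : S.AlmostGorenstein τ := by
  obtain ⟨g, hg⟩ := CBP.exists_units_Cmod_eq_span hτ hΔ hCB
  have hr := S.rX_pos_of_HF_ne_degX (by omega)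
  rw [show -(((S.rX - 1 : ℕ) : ℤ) + 1) = -(S.rX : ℤ) by omega] at hg
  refine almostGorenstein_iff_exists_units.mpr
    ⟨g, hg ▸ Submodule.mem_span_singleton_self _, fun x hx ↦ ?_⟩
  rw [← Vz_natCast] at hx
  exact trC_one_le_of_Cmod_eq_span hτ hg (hN 1 le_rfl hx)

end ZeroDimScheme

/-- Proposition 6.8 / `propSec5.5`.  Let `𝕏 ⊆ ℙⁿ_K` be a
0-dimensional locally Gorenstein scheme with `Δ_𝕏 = deg 𝕏 - HF_𝕏(r_𝕏 - 1) = 1`.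
Then `𝕏` is an almost Gorenstein scheme iff `𝕏` is a nearly Gorenstein
Cayley–Bacharach scheme. -/
theorem dedekind_CB_stmt16 (K : Type) [Field K] (n : ℕ) (S : ZeroDimScheme K n)
    (τ : ∀ j, (S.pt j).carrier →ₗ[K] K) (hτ : S.IsTraceFamily τ)
    (hΔ : S.degX - S.HF (S.rX - 1) = 1) :
    S.AlmostGorenstein τ ↔ (S.NearlyGorenstein τ ∧ S.CayleyBacharach) := by
  have hr := S.rX_pos_of_HF_ne_degX (by omega)
  exact ⟨fun h ↦ ⟨h.nearlyGorenstein, h.cayleyBacharach hτ hr⟩,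
    fun ⟨hN, hCB⟩ ↦ hN.almostGorenstein hτ hΔ hCB⟩
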